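/- Let G be a graph with a tree decomposition of width w and adhesion k ≥ 1. Then tww(G) ≤ 3·2^{k−1} + max(w−k−2, 0). -/

import Mathlib

/-!
# Twin-width and adhesion

The bags of the tree decomposition are removed leaf by leaf. When a bag `B` is removed, everything
below it has been contracted into *pieces*: disjoint vertex sets without edges between them, each
attached to a set `S` of at most `k` vertices of a remaining bag and contracted so that two
vertices of the piece are in one part exactly if they have the same neighbours in `S`. A piece has
at most `2 ^ k` parts, and its red edges stay inside the piece (`red_single`, `red_piece`).

Let `A` be the intersection of `B` with its parent and let `U = B \ A`. Pieces attached inside `A`,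
or inside any other remaining bag, are left alone. The others become, together with `U`, a single
piece attached to `A` (`Stage.remove`). They are absorbed one after the other into an accumulated
piece, whose parts correspond to neighbourhoods in `A` (`Mid.absorb`). First the attachment of the
next piece is shrunk to `S ∩ A`, which leaves at most `2 ^ (k - 1)` parts because `S` is not
contained in `A`; then these are merged into the accumulated ones. Only after that is `U`
contracted (`Mid.finish`). The red degree of a part is at most the number of available labels, less
its own (`deg_le`, `deg_lt`), less one more as soon as a merge of the two pieces has taken place
(`deg_lt_of_merged`).

The bound is tight enough because of the following observation. If `|A| = k`, a piece adjacent to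
all of `A` is attached to `A` itself and is not absorbed, so there are at most `2 ^ k - 1`
accumulated parts, and the red degree is at most
`(2 ^ k - 1) + 2 ^ (k - 1) + |U| - 2 ≤ 3 * 2 ^ (k - 1) + w - k - 2`.
If `|A| < k`, an auxiliary bag of size `k` between `A` and `B` is introduced (`BagList.add`), so
that the remaining case is `|B| ≤ k`, where there is room to spare.

Each phase coarsens one explicit partition to another, and the estimates hold for every partition
in between, so the order of the merges within a phase is irrelevant (`Reach.coarsen`).
-/

open scoped Classical

noncomputable section

/-- A trigraph: a finite graph whose edges are colored black or red. -/
structure Trigraph (V : Type*) where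
  black : V → V → Prop
  red : V → V → Prop
  black_symm : ∀ u v, black u v → black v u
  red_symm : ∀ u v, red u v → red v u
  black_irrefl : ∀ v, ¬ black v v
  red_irrefl : ∀ v, ¬ red v v
  not_black_and_red : ∀ u v, ¬ (black u v ∧ red u v)

variable {V : Type*}

/-- A simple graph seen as a trigraph with no red edges. -/
def SimpleGraph.toTrigraph (G : SimpleGraph V) : Trigraph V where
  black := G.Adj
  red _ _ := False
  black_symm _ _ h := h.symm
  red_symm _ _ h := h.elim
  black_irrefl _ h := G.irrefl h
  red_irrefl _ h := h
  not_black_and_red _ _ h := h.2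

/-- Induced subtrigraph on a set of vertices. -/
def Trigraph.induce (G : Trigraph V) (s : Set V) : Trigraph s where
  black u v := G.black u.1 v.1
  red u v := G.red u.1 v.1
  black_symm _ _ h := G.black_symm _ _ h
  red_symm _ _ h := G.red_symm _ _ h
  black_irrefl v := G.black_irrefl v.1
  red_irrefl v := G.red_irrefl v.1
  not_black_and_red u v := G.not_black_and_red u.1 v.1

/-- The discrete partition of the vertex set into singletons. -/
def discretePart (V : Type*) [Fintype V] : Finset (Finset V) :=
  Finset.univ.image fun v => ({v} : Finset V)

/-- `Q` is obtained from the partition `P` by merging (contracting) two distinct parts. -/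
def MergeStep (P Q : Finset (Finset V)) : Prop :=
  ∃ A ∈ P, ∃ B ∈ P, A ≠ B ∧ Q = insert (A ∪ B) ((P.erase A).erase B)

/-- Two parts are joined by a red edge in the quotient trigraph if there is a red edge
between them, or if they are not homogeneously connected by black edges. -/
def Trigraph.redAdj (G : Trigraph V) (A B : Finset V) : Prop :=
  A ≠ B ∧ ((∃ a ∈ A, ∃ b ∈ B, G.red a b) ∨
    ((∃ a ∈ A, ∃ b ∈ B, G.black a b) ∧ ¬ ∀ a ∈ A, ∀ b ∈ B, G.black a b))

/-- The red degree of a part `A` in the quotient of `G` by the partition `P`. -/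
def Trigraph.redDeg (G : Trigraph V) (P : Finset (Finset V)) (A : Finset V) : ℕ :=
  (P.filter fun B => G.redAdj A B).card

/-- The maximum red degree of the quotient of `G` by the partition `P`. -/
def Trigraph.maxRedDeg (G : Trigraph V) (P : Finset (Finset V)) : ℕ :=
  P.sup fun A => G.redDeg P A

/-- A contraction sequence of partitions: starts with the discrete partition, and each
step merges two parts. -/
def IsCSeq (V : Type*) [Fintype V] (len : ℕ) (f : ℕ → Finset (Finset V)) : Prop :=
  f 0 = discretePart V ∧ ∀ i < len, MergeStep (f i) (f (i + 1))

/-- The twin-width of a trigraph: the minimum over all complete contraction sequences of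
the maximum red degree attained. -/
def Trigraph.tww [Fintype V] (G : Trigraph V) : ℕ :=
  sInf { w | ∃ f : ℕ → Finset (Finset V),
    IsCSeq V (Fintype.card V - 1) f ∧
    f (Fintype.card V - 1) = {Finset.univ} ∧
    ∀ i ≤ Fintype.card V - 1, G.maxRedDeg (f i) ≤ w }

/-- The final partition of a `U`-contraction sequence: `U` is one part,
all other vertices are singletons. -/
def finalOn (V : Type*) [Fintype V] (U : Finset V) : Finset (Finset V) :=
  insert U ((Finset.univ \ U).image fun v => ({v} : Finset V))

/-- `tww_U(G)`: the minimum width of a partial contraction sequence involving only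
vertices of `U` and contracting `U` into a single part. -/
def Trigraph.twwOn [Fintype V] (G : Trigraph V) (U : Finset V) : ℕ :=
  sInf { w | ∃ f : ℕ → Finset (Finset V),
    IsCSeq V (U.card - 1) f ∧ f (U.card - 1) = finalOn V U ∧
    ∀ i ≤ U.card - 1, G.maxRedDeg (f i) ≤ w }

/-- A partition respects `A` if all vertices of `A` are singleton parts of red degree `0`. -/
def Trigraph.Respects (G : Trigraph V) (A : Finset V) (P : Finset (Finset V)) : Prop :=
  (∀ a ∈ A, ({a} : Finset V) ∈ P) ∧ ∀ a ∈ A, G.redDeg P {a} = 0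

/-- A partition respecting `A` is complete if no two parts outside `A` have the same
(black) neighborhood in `A`. -/
def Trigraph.CompleteFor (G : Trigraph V) (A : Finset V) (P : Finset (Finset V)) : Prop :=
  ∀ B ∈ P, ∀ C ∈ P, B ≠ C → Disjoint B A → Disjoint C A →
    ¬ ∀ a ∈ A, ((∃ b ∈ B, G.black b a) ↔ ∃ c ∈ C, G.black c a)

/-- `tww(G, A)`: the minimum width of a complete contraction sequence respecting `A`. -/
def Trigraph.twwR [Fintype V] (G : Trigraph V) (A : Finset V) : ℕ :=
  sInf { w | ∃ (len : ℕ) (f : ℕ → Finset (Finset V)), IsCSeq V len f ∧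
    (∀ i ≤ len, G.Respects A (f i)) ∧ G.CompleteFor A (f len) ∧
    ∀ i ≤ len, G.maxRedDeg (f i) ≤ w }

/-- A rooted tree decomposition of `G`, encoded via a parent function on the index
type `ι`: bags cover all vertices and edges, and for every vertex the set of bags
containing it forms a subtree. -/
structure RootedTreeDecomp {V : Type*} (G : SimpleGraph V) (ι : Type*) where
  par : ι → ι
  root : ι
  par_root : par root = root
  reaches : ∀ t, ∃ n, par^[n] t = root
  B : ι → Finset V
  cover : ∀ v, ∃ t, v ∈ B t
  edge : ∀ u v, G.Adj u v → ∃ t, u ∈ B t ∧ v ∈ B t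
  subtree : ∀ v s, v ∈ B s → v ∈ B (par s) ∨ ∀ t, v ∈ B t → ∃ n, par^[n] t = s

namespace TwwAdhesion

/-! ### Contraction sequences of equivalence relations -/

section Sequences

variable [Fintype V]

/-- The part of the partition given by `r` that contains `v`. -/
def cls (r : Setoid V) (v : V) : Finset V := Finset.univ.filter fun x => r v x

/-- The partition into `r`-classes, in the encoding used for contraction sequences. -/
def parts (r : Setoid V) : Finset (Finset V) := Finset.univ.image (cls r)

/-- The relation obtained from `r` by merging the classes of `x` and `y`. -/
def glue (r : Setoid V) (x y : V) : Setoid V where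
  r a b := r a b ∨ ((r a x ∨ r a y) ∧ (r b x ∨ r b y))
  iseqv := by
    refine ⟨fun a => Or.inl (r.refl a), ?_, ?_⟩
    · rintro a b (h | ⟨h1, h2⟩)
      · exact Or.inl (r.symm h)
      · exact Or.inr ⟨h2, h1⟩
    · rintro a b c (h | ⟨h1, h2⟩) (h' | ⟨h1', h2'⟩)
      · exact Or.inl (r.trans h h')
      · exact Or.inr ⟨h1'.imp (r.trans h) (r.trans h), h2'⟩
      · exact Or.inr ⟨h1, h2.imp (r.trans (r.symm h')) (r.trans (r.symm h'))⟩
      · exact Or.inr ⟨h1, h2'⟩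

/-- All red degrees in the quotient of `G` by `r` are at most `D`. -/
def Narrow (G : SimpleGraph V) (D : ℕ) (r : Setoid V) : Prop :=
  ∀ v, G.toTrigraph.redDeg (parts r) (cls r v) ≤ D

/-- `r` is reached from the discrete partition by merges of classes, never exceeding red
degree `D`. -/
inductive Reach (G : SimpleGraph V) (D : ℕ) : Setoid V → Prop
  | base : Reach G D ⊥
  | step {r : Setoid V} (x y : V) : Reach G D r → ¬ r x y → Narrow G D (glue r x y) →
      Reach G D (glue r x y)

/-- The classes of `v` and `x` are distinct and joined by a red edge of the quotient. -/
def RedR (G : SimpleGraph V) (r : Setoid V) (v x : V) : Prop :=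
  ¬ r v x ∧ (∃ v₁ x₁, r v v₁ ∧ r x x₁ ∧ G.Adj v₁ x₁) ∧
    ∃ v₂ x₂, r v v₂ ∧ r x x₂ ∧ ¬ G.Adj v₂ x₂

lemma mem_cls {r : Setoid V} {v x : V} : x ∈ cls r v ↔ r v x := by simp [cls]

lemma cls_eq {r : Setoid V} {v x : V} : cls r v = cls r x ↔ r v x := by
  constructor
  · intro h
    have : x ∈ cls r x := mem_cls.2 (r.refl x)
    rw [← h] at this
    exact mem_cls.1 this
  · intro h
    ext y
    rw [mem_cls, mem_cls]
    exact ⟨fun h' => r.trans (r.symm h) h', fun h' => r.trans h h'⟩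

lemma redAdj_cls {G : SimpleGraph V} {r : Setoid V} {v x : V}
    (h : G.toTrigraph.redAdj (cls r v) (cls r x)) : RedR G r v x := by
  obtain ⟨hne, h⟩ := h
  refine ⟨fun h' => hne (cls_eq.2 h'), ?_⟩
  rcases h with ⟨a, _, b, _, h⟩ | ⟨⟨a, ha, b, hb, hab⟩, hn⟩
  · exact h.elim
  · push Not at hn
    obtain ⟨c, hc, d, hd, hcd⟩ := hn
    exact ⟨⟨a, b, mem_cls.1 ha, mem_cls.1 hb, hab⟩, ⟨c, d, mem_cls.1 hc, mem_cls.1 hd, hcd⟩⟩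

lemma RedR.symm {G : SimpleGraph V} {r : Setoid V} {v x : V} (h : RedR G r v x) :
    RedR G r x v := by
  obtain ⟨h0, ⟨a, b, ha, hb, hab⟩, ⟨c, d, hc, hd, hcd⟩⟩ := h
  exact ⟨fun h' => h0 (r.symm h'), ⟨b, a, hb, ha, hab.symm⟩,
    ⟨d, c, hd, hc, fun h' => hcd h'.symm⟩⟩

/-- Red degrees are bounded by counting labels of a finer labelling `ℓ`: inequivalent vertices
have different labels, so it suffices that every red neighbour has a representative whose
label lies in `T`. -/
lemma deg_le {G : SimpleGraph V} {r : Setoid V} {β : Type*} (ℓ : V → β)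
    (hℓ : ∀ x y, ℓ x = ℓ y → r x y) (v : V) (T : Finset β)
    (h : ∀ x, RedR G r v x → ∃ y, r x y ∧ ℓ y ∈ T) :
    G.toTrigraph.redDeg (parts r) (cls r v) ≤ T.card := by
  unfold Trigraph.redDeg
  refine Finset.card_le_card_of_forall_subsingleton
    (fun C l => ∃ y, cls r y = C ∧ ℓ y = l) ?_ ?_
  · intro C hC
    rw [Finset.mem_filter, parts, Finset.mem_image] at hC
    obtain ⟨⟨x, -, rfl⟩, hred⟩ := hC
    obtain ⟨y, hxy, hy⟩ := h x (redAdj_cls hred)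
    exact ⟨ℓ y, hy, y, cls_eq.2 (r.symm hxy), rfl⟩
  · rintro l - C ⟨-, y, rfl, hy⟩ C' ⟨-, y', rfl, hy'⟩
    exact cls_eq.2 (hℓ _ _ (hy.trans hy'.symm))

/-- As `deg_le`; the own label of `v` need not be counted. -/
lemma deg_lt {G : SimpleGraph V} {r : Setoid V} {β : Type*} (ℓ : V → β)
    (hℓ : ∀ x y, ℓ x = ℓ y → r x y) (v : V) (T : Finset β)
    (h : ∀ x, RedR G r v x → ∃ y, r x y ∧ ℓ y ∈ T) (hv : ℓ v ∈ T) :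
    G.toTrigraph.redDeg (parts r) (cls r v) + 1 ≤ T.card := by
  rw [← Finset.card_erase_add_one hv]
  refine Nat.add_le_add_right (deg_le ℓ hℓ v _ fun x hx => ?_) 1
  obtain ⟨y, hxy, hy⟩ := h x hx
  refine ⟨y, hxy, Finset.mem_erase.2 ⟨fun he => hx.1 ?_, hy⟩⟩
  exact r.symm (r.trans hxy (hℓ _ _ he))

/-- As `deg_lt`; a pair of labels already merged by `r` is counted only once. -/
lemma deg_lt_of_merged {G : SimpleGraph V} {r : Setoid V} {β : Type*} (ℓ : V → β)
    (hℓ : ∀ x y, ℓ x = ℓ y → r x y) (v : V) (T : Finset β)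
    (h : ∀ x, RedR G r v x → ∃ y, r x y ∧ ℓ y ∈ T) (hv : ℓ v ∈ T)
    (y z : V) (hyz : r y z) (hne : ℓ y ≠ ℓ z) (hy : ℓ y ∈ T) (hz : ℓ z ∈ T) :
    G.toTrigraph.redDeg (parts r) (cls r v) + 2 ≤ T.card := by
  by_cases hvy : r v y
  · have hz' : ℓ z ∈ T.erase (ℓ y) := Finset.mem_erase.2 ⟨hne.symm, hz⟩
    have hc := Finset.card_erase_add_one hy
    have hc' := Finset.card_erase_add_one hz'
    have := deg_le (G := G) ℓ hℓ v ((T.erase (ℓ y)).erase (ℓ z)) fun x hx => by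
      obtain ⟨t, hxt, ht⟩ := h x hx
      refine ⟨t, hxt, Finset.mem_erase.2 ⟨fun he => hx.1 ?_,
        Finset.mem_erase.2 ⟨fun he => hx.1 ?_, ht⟩⟩⟩
      · exact r.trans hvy (r.trans hyz (r.symm (r.trans hxt (hℓ _ _ he))))
      · exact r.trans hvy (r.symm (r.trans hxt (hℓ _ _ he)))
    omega
  · have hv' : ℓ v ∈ T.erase (ℓ y) := Finset.mem_erase.2 ⟨fun he => hvy (hℓ _ _ he), hv⟩
    have hc := Finset.card_erase_add_one hy
    have hc' := Finset.card_erase_add_one hv'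
    have := deg_le (G := G) ℓ hℓ v ((T.erase (ℓ y)).erase (ℓ v)) fun x hx => by
      obtain ⟨t, hxt, ht⟩ := h x hx
      have key : ∀ s, r x s → ℓ s ≠ ℓ v := fun s hs he =>
        hx.1 (r.symm (r.trans hs (hℓ _ _ he)))
      by_cases hty : ℓ t = ℓ y
      · have hxz : r x z := r.trans hxt (r.trans (hℓ _ _ hty) hyz)
        exact ⟨z, hxz, Finset.mem_erase.2 ⟨key z hxz, Finset.mem_erase.2 ⟨hne.symm, hz⟩⟩⟩
      · exact ⟨t, hxt, Finset.mem_erase.2 ⟨key t hxt, Finset.mem_erase.2 ⟨hty, ht⟩⟩⟩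
    omega

/-- If every partition between `r₁` and `r₂` is narrow, the merges leading from `r₁` to `r₂` may
be made in any order. -/
lemma Reach.coarsen {G : SimpleGraph V} {D : ℕ} {r₁ r₂ : Setoid V} (h₁ : Reach G D r₁)
    (hle : ∀ x y, r₁ x y → r₂ x y)
    (hw : ∀ r : Setoid V, (∀ x y, r₁ x y → r x y) → (∀ x y, r x y → r₂ x y) → Narrow G D r) :
    Reach G D r₂ := by
  induction hn : (Finset.univ.filter fun q : V × V => ¬ r₁ q.1 q.2).card using
    Nat.strong_induction_on generalizing r₁ with
  | _ n ih =>
    by_cases heq : ∀ x y, r₂ x y → r₁ x y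
    · have : r₁ = r₂ := Setoid.ext fun x y => ⟨hle x y, heq x y⟩
      exact this ▸ h₁
    · push Not at heq
      obtain ⟨x, y, hxy, hxy'⟩ := heq
      have hg1 : ∀ a b, r₁ a b → glue r₁ x y a b := fun a b h => Or.inl h
      have hg2 : ∀ a b, glue r₁ x y a b → r₂ a b := by
        have aux : ∀ a, r₁ a x ∨ r₁ a y → r₂ a x := by
          rintro a (h | h)
          · exact hle _ _ h
          · exact r₂.trans (hle _ _ h) (r₂.symm hxy)
        rintro a b (h | ⟨h1, h2⟩)
        · exact hle _ _ h
        · exact r₂.trans (aux a h1) (r₂.symm (aux b h2))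
      refine ih _ ?_ (Reach.step x y h₁ hxy' (hw _ hg1 hg2)) hg2
        (fun r h1 h2 => hw r (fun a b h => h1 a b (hg1 a b h)) h2) rfl
      rw [← hn]
      refine Finset.card_lt_card (Finset.ssubset_iff_of_subset ?_ |>.2 ⟨(x, y), ?_, ?_⟩)
      · intro q hq
        simp only [Finset.mem_filter, Finset.mem_univ, true_and] at hq ⊢
        exact fun h => hq (hg1 _ _ h)
      · simpa using hxy'
      · simp only [Finset.mem_filter, Finset.mem_univ, true_and, not_not]
        exact Or.inr ⟨Or.inl (r₁.refl x), Or.inr (r₁.refl y)⟩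

lemma parts_bot : parts (⊥ : Setoid V) = discretePart V := by
  unfold parts discretePart
  congr 1
  ext v x
  simp [cls, eq_comm]

lemma cls_glue (r : Setoid V) (x y v : V) :
    cls (glue r x y) v = if r v x ∨ r v y then cls r x ∪ cls r y else cls r v := by
  ext a
  rw [mem_cls]
  change (r v a ∨ ((r v x ∨ r v y) ∧ (r a x ∨ r a y))) ↔ _
  split_ifs with h
  · rw [Finset.mem_union, mem_cls, mem_cls]
    constructor
    · rintro (h' | ⟨-, h' | h'⟩)
      · exact h.imp (fun g => r.trans (r.symm g) h') (fun g => r.trans (r.symm g) h')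
      · exact Or.inl (r.symm h')
      · exact Or.inr (r.symm h')
    · exact fun h' => Or.inr ⟨h, h'.imp r.symm r.symm⟩
  · rw [mem_cls]
    simp [h]

lemma parts_glue (r : Setoid V) (x y : V) :
    parts (glue r x y) =
      insert (cls r x ∪ cls r y) (((parts r).erase (cls r x)).erase (cls r y)) := by
  ext C
  simp only [parts, Finset.mem_image, Finset.mem_univ, true_and, Finset.mem_insert,
    Finset.mem_erase]
  constructor
  · rintro ⟨v, rfl⟩
    rw [cls_glue]
    split_ifs with h
    · exact Or.inl rfl
    · push Not at h
      exact Or.inr ⟨fun e => h.2 (cls_eq.1 e), fun e => h.1 (cls_eq.1 e), v, rfl⟩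
  · rintro (rfl | ⟨h1, h2, v, rfl⟩)
    · exact ⟨x, by rw [cls_glue, if_pos (Or.inl (r.refl x))]⟩
    · refine ⟨v, ?_⟩
      rw [cls_glue, if_neg]
      rintro (h | h)
      · exact h2 (cls_eq.2 h)
      · exact h1 (cls_eq.2 h)

lemma mem_parts (r : Setoid V) (x : V) : cls r x ∈ parts r :=
  Finset.mem_image_of_mem _ (Finset.mem_univ x)

lemma card_parts_glue (r : Setoid V) {x y : V} (h : ¬ r x y) :
    (parts (glue r x y)).card + 1 = (parts r).card := by
  have hne : cls r y ≠ cls r x := fun e => h (r.symm (cls_eq.1 e))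
  have h1 := Finset.card_erase_add_one (mem_parts r x)
  have h2 := Finset.card_erase_add_one (Finset.mem_erase.2 ⟨hne, mem_parts r y⟩)
  rw [parts_glue, Finset.card_insert_of_notMem]
  · omega
  · simp only [Finset.mem_erase, not_and, parts, Finset.mem_image, Finset.mem_univ, true_and]
    rintro - - ⟨v, hv⟩
    have hx : x ∈ cls r v := by rw [hv]; simp [mem_cls]
    have hy : y ∈ cls r v := by rw [hv]; simp [mem_cls]
    exact h (r.trans (r.symm (mem_cls.1 hx)) (mem_cls.1 hy))

lemma maxRedDeg_le {G : SimpleGraph V} {D : ℕ} {r : Setoid V} (h : Narrow G D r) :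
    G.toTrigraph.maxRedDeg (parts r) ≤ D := by
  refine Finset.sup_le fun C hC => ?_
  obtain ⟨v, -, rfl⟩ := Finset.mem_image.1 hC
  exact h v

lemma narrow_bot (G : SimpleGraph V) (D : ℕ) : Narrow G D ⊥ := by
  intro v
  refine (deg_le (G := G) (r := ⊥) (id : V → V) (fun x y h => h) v ∅ ?_).trans (Nat.zero_le D)
  rintro x ⟨-, ⟨a, b, ha, hb, hab⟩, ⟨c, d, hc, hd, hcd⟩⟩
  change v = a at ha
  change x = b at hb
  change v = c at hc
  change x = d at hd
  subst ha hb hc hd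
  exact (hcd hab).elim

lemma Reach.exists_seq {G : SimpleGraph V} {D : ℕ} {r : Setoid V} (h : Reach G D r) :
    ∃ (n : ℕ) (f : ℕ → Finset (Finset V)), IsCSeq V n f ∧ f n = parts r ∧
      (∀ i ≤ n, G.toTrigraph.maxRedDeg (f i) ≤ D) ∧ n + (parts r).card = Fintype.card V := by
  induction h with
  | base =>
    refine ⟨0, fun _ => discretePart V, ⟨rfl, by simp⟩, parts_bot.symm, fun i _ => ?_, ?_⟩
    · rw [← parts_bot]
      exact maxRedDeg_le (narrow_bot G D)
    · rw [parts_bot, discretePart, Finset.card_image_of_injective _ Finset.singleton_injective,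
        zero_add, Finset.card_univ]
  | @step r x y _ hxy hN ih =>
    obtain ⟨n, f, ⟨hf0, hf⟩, hfn, hfD, hc⟩ := ih
    have hc' := card_parts_glue r hxy
    refine ⟨n + 1, fun i => if i ≤ n then f i else parts (glue r x y), ⟨by simpa using hf0, ?_⟩,
      by simp, ?_, by omega⟩
    · intro i hi
      rcases Nat.lt_succ_iff_lt_or_eq.1 hi with hi' | rfl
      · have : i + 1 ≤ n := hi'
        simpa [hi'.le, this] using hf i hi'
      · simp only [le_refl, if_true, Nat.not_succ_le_self, if_false]
        rw [hfn, parts_glue]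
        exact ⟨_, mem_parts r x, _, mem_parts r y, fun e => hxy (cls_eq.1 e), rfl⟩
    · intro i hi
      dsimp only
      split_ifs with h
      · exact hfD i h
      · exact maxRedDeg_le hN

/-- The empty graph needs a separate word: it has no complete contraction sequence in the chosen
encoding, so its twin-width is the junk value `sInf ∅ = 0`. -/
lemma tww_le_of_reach {G : SimpleGraph V} {D : ℕ} (h : Reach G D ⊤) :
    G.toTrigraph.tww ≤ D := by
  rcases isEmpty_or_nonempty V with hV | hV
  · have : {w | ∃ f : ℕ → Finset (Finset V),
        IsCSeq V (Fintype.card V - 1) f ∧ f (Fintype.card V - 1) = {Finset.univ} ∧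
        ∀ i ≤ Fintype.card V - 1, G.toTrigraph.maxRedDeg (f i) ≤ w} = ∅ := by
      ext w
      simp only [Set.mem_ofPred_eq, Set.mem_empty_iff_false, iff_false]
      rintro ⟨f, ⟨h0, -⟩, h1, -⟩
      have : Fintype.card V - 1 = 0 := by simp
      rw [this, h0, discretePart, Finset.univ_eq_empty, Finset.image_empty] at h1
      exact absurd h1.symm (Finset.singleton_ne_empty _)
    unfold Trigraph.tww
    rw [this]
    simp
  · obtain ⟨n, f, hf, hfn, hfD, hc⟩ := h.exists_seq
    have hp : parts (⊤ : Setoid V) = {Finset.univ} := by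
      have : cls (⊤ : Setoid V) = fun _ => Finset.univ := by
        ext v x
        simp [mem_cls, Setoid.top_def]
      rw [parts, this, Finset.image_const Finset.univ_nonempty]
    rw [hp, Finset.card_singleton] at hc
    have hn : Fintype.card V - 1 = n := by omega
    refine Nat.sInf_le ⟨f, ?_⟩
    rw [hn]
    exact ⟨hf, hfn.trans hp, hfD⟩

end Sequences

/-! ### Partitions given by pieces and their attachments -/

/-- The labelling describing a stage of the contraction. Vertices of `W` are still singletons;
each other vertex `v` belongs to the piece number `p v`, and two vertices of one piece are
contracted if they have the same neighbours in the set `S (p v)` attached to that piece. -/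
def lab (G : SimpleGraph V) (W : Finset V) (p : V → ℕ) (S : ℕ → Finset V) (v : V) :
    V ⊕ (ℕ × Finset V) :=
  if v ∈ W then Sum.inl v else Sum.inr (p v, (S (p v)).filter (G.Adj v))

section Lab

variable {G : SimpleGraph V} {W : Finset V} {p : V → ℕ} {S : ℕ → Finset V}

lemma lab_in {v : V} (h : v ∈ W) : lab G W p S v = Sum.inl v := if_pos h

lemma lab_out {v : V} (h : v ∉ W) :
    lab G W p S v = Sum.inr (p v, (S (p v)).filter (G.Adj v)) := if_neg h

lemma lab_eq_in {v x : V} (h : v ∈ W) (he : lab G W p S v = lab G W p S x) : v = x := by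
  rw [lab_in h] at he
  by_cases hx : x ∈ W
  · rw [lab_in hx] at he
    exact Sum.inl.inj he
  · rw [lab_out hx] at he
    cases he

lemma lab_eq_out {v x : V} (h : v ∉ W) (he : lab G W p S v = lab G W p S x) :
    x ∉ W ∧ p v = p x ∧ (S (p v)).filter (G.Adj v) = (S (p v)).filter (G.Adj x) := by
  have hx : x ∉ W := fun hx => h (by rw [← lab_eq_in hx he.symm]; exact hx)
  rw [lab_out h, lab_out hx] at he
  have h1 := congrArg Prod.fst (Sum.inr.inj he)
  have h2 := congrArg Prod.snd (Sum.inr.inj he)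
  dsimp only at h1 h2
  exact ⟨hx, h1, by rw [h2, h1]⟩

lemma lab_eq_of {v x : V} (hv : v ∉ W) (hx : x ∉ W) (hp : p v = p x)
    (hS : ∀ a ∈ S (p v), G.Adj v a ↔ G.Adj x a) : lab G W p S v = lab G W p S x := by
  rw [lab_out hv, lab_out hx, ← hp, Finset.filter_congr hS]

/-- A red neighbour of a singleton `v ∈ W` lies in a piece whose attachment avoids `v`. -/
lemma red_single {r : Setoid V} (hr : ∀ x y, r x y → lab G W p S x = lab G W p S y)
    {v x : V} (hv : v ∈ W) (h : RedR G r v x) :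
    x ∉ W ∧ v ∉ S (p x) ∧ (∃ y, r x y ∧ y ∉ W ∧ p y = p x ∧ G.Adj y v) ∧
      ∃ y, r x y ∧ y ∉ W ∧ p y = p x ∧ ¬ G.Adj y v := by
  obtain ⟨-, ⟨a, b, ha, hb, hab⟩, ⟨c, d, hc, hd, hcd⟩⟩ := h
  obtain rfl := lab_eq_in hv (hr _ _ ha)
  obtain rfl := lab_eq_in hv (hr _ _ hc)
  have hx : x ∉ W := by
    intro hx
    obtain rfl := lab_eq_in hx (hr _ _ hb)
    obtain rfl := lab_eq_in hx (hr _ _ hd)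
    exact hcd hab
  obtain ⟨hb1, hb2, hb3⟩ := lab_eq_out hx (hr _ _ hb)
  obtain ⟨hd1, hd2, hd3⟩ := lab_eq_out hx (hr _ _ hd)
  refine ⟨hx, fun hvS => hcd ?_, ⟨b, hb, hb1, hb2.symm, hab.symm⟩,
    ⟨d, hd, hd1, hd2.symm, fun h => hcd h.symm⟩⟩
  have : v ∈ (S (p x)).filter (G.Adj b) := Finset.mem_filter.2 ⟨hvS, hab.symm⟩
  rw [← hb3, hd3] at this
  exact (Finset.mem_filter.1 this).2.symm

/-- Outside `W`, red edges stay inside a piece. -/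
lemma red_piece {r : Setoid V} (hr : ∀ x y, r x y → lab G W p S x = lab G W p S y)
    (hconn : ∀ v u, v ∉ W → u ∉ W → G.Adj v u → p v = p u)
    {v x : V} (hv : v ∉ W) (hx : x ∉ W) (h : RedR G r v x) : p v = p x := by
  obtain ⟨-, ⟨a, b, ha, hb, hab⟩, -⟩ := h
  obtain ⟨ha1, ha2, -⟩ := lab_eq_out hv (hr _ _ ha)
  obtain ⟨hb1, hb2, -⟩ := lab_eq_out hx (hr _ _ hb)
  rw [ha2, hb2]
  exact hconn a b ha1 hb1 hab

end Lab

/-- The labels of a piece numbered `i` whose neighbourhood patterns range over `𝒵`. -/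
def pieceT (i : ℕ) (𝒵 : Finset (Finset V)) : Finset (V ⊕ (ℕ × Finset V)) :=
  𝒵.image fun Z => Sum.inr (i, Z)

/-- The labels of the singletons in `X`. -/
def vertT (X : Finset V) : Finset (V ⊕ (ℕ × Finset V)) := X.image Sum.inl

lemma card_pieceT (i : ℕ) (𝒵 : Finset (Finset V)) : (pieceT i 𝒵).card ≤ 𝒵.card :=
  Finset.card_image_le

lemma card_vertT (X : Finset V) : (vertT X).card ≤ X.card := Finset.card_image_le

lemma mem_pieceT {i : ℕ} {𝒵 : Finset (Finset V)} {Z : Finset V} (h : Z ∈ 𝒵) :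
    (Sum.inr (i, Z) : V ⊕ (ℕ × Finset V)) ∈ pieceT i 𝒵 :=
  Finset.mem_image.2 ⟨Z, h, rfl⟩

lemma mem_vertT {X : Finset V} {x : V} (h : x ∈ X) :
    (Sum.inl x : V ⊕ (ℕ × Finset V)) ∈ vertT X := Finset.mem_image.2 ⟨x, h, rfl⟩

section Absorb

variable [Fintype V] {G : SimpleGraph V}

/-- A stage in the processing of a bag `B`, whose vertices outside `A` are about to be forgotten.
The piece numbered `q` accumulates the pieces processed so far, contracted by their
neighbourhoods in `A`, which all lie in `𝒵`. A piece with another number `j` has all its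
neighbours in `W` inside its attachment `S j`. -/
structure Mid (G : SimpleGraph V) (D k q : ℕ) (W A B : Finset V) (𝒵 : Finset (Finset V))
    (S : ℕ → Finset V) (p : V → ℕ) : Prop where
  reach : Reach G D (Setoid.ker (lab G W p S))
  conn : ∀ v u, v ∉ W → u ∉ W → G.Adj v u → p v = p u
  att : ∀ v u, v ∉ W → u ∈ W → G.Adj v u → p v ≠ q → u ∈ S (p v)
  attq : ∀ v u, v ∉ W → u ∈ W → G.Adj v u → p v = q → u ∈ B
  Sq : S q = A
  pat : ∀ v, v ∉ W → p v = q → A.filter (G.Adj v) ∈ 𝒵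
  card : ∀ v, v ∉ W → p v ≠ q → (S (p v)).card ≤ k

/-- The first half of absorbing the piece `i`: its attachment is shrunk to `S i ∩ A`. -/
lemma absorb_shrink {D k q i : ℕ} {W A B : Finset V} {𝒵 : Finset (Finset V)}
    {S : ℕ → Finset V} {p : V → ℕ} (h : Mid G D k q W A B 𝒵 S p) (hk : 1 ≤ k) (hiq : i ≠ q)
    (hi : (S i).card ≤ k)
    (N1 : 2 ^ k + k ≤ D + 1) (N2 : 𝒵.card + 2 ^ (k - 1) ≤ D)
    (N4 : 𝒵.card + (B \ A).card ≤ D + 1) :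
    Reach G D (Setoid.ker (lab G W p (Function.update S i (S i ∩ A)))) := by
  set S₁ := Function.update S i (S i ∩ A) with hS₁
  have hSi : S₁ i = S i ∩ A := Function.update_self ..
  have hSne : ∀ j, j ≠ i → S₁ j = S j := fun j hj => Function.update_of_ne hj ..
  have hSq : S₁ q = A := by rw [hSne q hiq.symm, h.Sq]
  refine h.reach.coarsen ?_ ?_
  · intro x y hxy
    have hxy : lab G W p S x = lab G W p S y := hxy
    change lab G W p S₁ x = lab G W p S₁ y
    by_cases hx : x ∈ W
    · rw [lab_eq_in hx hxy]
    · obtain ⟨hy, hp, hf⟩ := lab_eq_out hx hxy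
      refine lab_eq_of hx hy hp fun a ha => ?_
      have ha' : a ∈ S (p x) := by
        by_cases hpi : p x = i
        · rw [hpi, hSi] at ha
          rw [hpi]
          exact (Finset.mem_inter.1 ha).1
        · rwa [hSne _ hpi] at ha
      have := Finset.ext_iff.1 hf a
      simpa [ha'] using this
  · intro r hr1 hr2 v
    have hℓ : ∀ x y, lab G W p S x = lab G W p S y → r x y := hr1
    have hr2 : ∀ x y, r x y → lab G W p S₁ x = lab G W p S₁ y := hr2
    have hpow : 2 ^ (k - 1) * 2 = 2 ^ k := by rw [← pow_succ]; congr 1; omega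
    have hkD : 2 ^ k ≤ D := by omega
    by_cases hv : v ∈ W
    · have key : ∀ x, RedR G r v x → (p x = q ∨ p x = i) := by
        intro x hx
        obtain ⟨hxW, hvS, ⟨y, -, hyW, hpy, hadj⟩, -⟩ := red_single hr2 hv hx
        by_contra! hc
        refine hvS ?_
        rw [hSne _ hc.2, ← hpy]
        exact h.att y v hyW hv hadj (by rw [hpy]; exact hc.1)
      have keyq : ∀ x, RedR G r v x → p x = q → lab G W p S x ∈ pieceT q 𝒵 := by
        intro x hx hpx
        obtain ⟨hxW, -⟩ := red_single hr2 hv hx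
        rw [lab_out hxW, hpx, h.Sq]
        exact mem_pieceT (h.pat x hxW hpx)
      by_cases hvi : v ∈ S i
      · -- The red neighbours of `v` in the piece `i` are counted by representatives
        -- that are not adjacent to `v`.
        refine (deg_le (lab G W p S) hℓ v (pieceT q 𝒵 ∪ pieceT i ((S i).erase v).powerset)
          fun x hx => ?_).trans ?_
        · rcases key x hx with hpx | hpx
          · exact ⟨x, r.refl x, Finset.mem_union_left _ (keyq x hx hpx)⟩
          · obtain ⟨-, -, -, ⟨y, hxy, hyW, hpy, hadj⟩⟩ := red_single hr2 hv hx
            refine ⟨y, hxy, Finset.mem_union_right _ ?_⟩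
            rw [lab_out hyW, hpy, hpx]
            refine mem_pieceT (Finset.mem_powerset.2 fun a ha => ?_)
            obtain ⟨ha1, ha2⟩ := Finset.mem_filter.1 ha
            refine Finset.mem_erase.2 ⟨?_, ha1⟩
            rintro rfl
            exact hadj ha2
        · have h1 := card_pieceT (V := V) q 𝒵
          have h2 := card_pieceT i ((S i).erase v).powerset
          rw [Finset.card_powerset, Finset.card_erase_of_mem hvi] at h2
          have h3 : 2 ^ ((S i).card - 1) ≤ 2 ^ (k - 1) :=
            Nat.pow_le_pow_right (by norm_num) (by omega)
          have := Finset.card_union_le (pieceT q 𝒵) (pieceT i ((S i).erase v).powerset)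
          omega
      · refine (deg_le (lab G W p S) hℓ v (pieceT q 𝒵) fun x hx => ?_).trans
          ((card_pieceT _ _).trans (by omega))
        rcases key x hx with hpx | hpx
        · exact ⟨x, r.refl x, keyq x hx hpx⟩
        · obtain ⟨-, -, ⟨y, -, hyW, hpy, hadj⟩, -⟩ := red_single hr2 hv hx
          have := h.att y v hyW hv hadj (by rw [hpy, hpx]; exact hiq)
          rw [hpy, hpx] at this
          exact absurd this hvi
    · -- The neighbours of the class of `v` in `W`, if `v` is outside `W`.
      have keyW : ∀ x, x ∈ W → RedR G r v x → x ∉ S₁ (p v) ∧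
          (p v ≠ q → x ∈ S (p v)) ∧ (p v = q → x ∈ B) := by
        intro x hxW hx
        obtain ⟨-, hvS, ⟨y, -, hyW, hpy, hadj⟩, -⟩ := red_single hr2 hxW hx.symm
        refine ⟨hvS, fun hne => ?_, fun he => ?_⟩
        · rw [← hpy]
          exact h.att y x hyW hxW hadj (by rwa [hpy])
        · exact h.attq y x hyW hxW hadj (by rwa [hpy])
      have keyP : ∀ x, x ∉ W → RedR G r v x → p v = p x := fun x hxW hx =>
        red_piece hr2 h.conn hv hxW hx
      by_cases hpq : p v = q
      · have hvT : lab G W p S v ∈ pieceT q 𝒵 ∪ vertT (B \ A) := by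
          rw [lab_out hv, hpq, h.Sq]
          exact Finset.mem_union_left _ (mem_pieceT (h.pat v hv hpq))
        have := deg_lt (G := G) (lab G W p S) hℓ v (pieceT q 𝒵 ∪ vertT (B \ A))
          (fun x hx => ⟨x, r.refl x, ?_⟩) hvT
        · have h1 := card_pieceT (V := V) q 𝒵
          have h2 := card_vertT (B \ A)
          have h3 := Finset.card_union_le (pieceT q 𝒵) (vertT (B \ A))
          omega
        · by_cases hxW : x ∈ W
          · obtain ⟨h1, -, h2⟩ := keyW x hxW hx
            rw [hpq, hSq] at h1
            rw [lab_in hxW]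
            exact Finset.mem_union_right _ (mem_vertT (Finset.mem_sdiff.2 ⟨h2 hpq, h1⟩))
          · have hpx := (keyP x hxW hx).symm.trans hpq
            rw [lab_out hxW, hpx, h.Sq]
            exact Finset.mem_union_left _ (mem_pieceT (h.pat x hxW hpx))
      · have hvT : lab G W p S v ∈ pieceT (p v) (S (p v)).powerset ∪ vertT (S (p v)) := by
          rw [lab_out hv]
          exact Finset.mem_union_left _ (mem_pieceT (Finset.mem_powerset.2
            (Finset.filter_subset _ _)))
        have := deg_lt (G := G) (lab G W p S) hℓ v
          (pieceT (p v) (S (p v)).powerset ∪ vertT (S (p v)))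
          (fun x hx => ⟨x, r.refl x, ?_⟩) hvT
        · have h1 := card_pieceT (p v) (S (p v)).powerset
          have h2 := card_vertT (S (p v))
          have h3 := Finset.card_union_le (pieceT (p v) (S (p v)).powerset) (vertT (S (p v)))
          have h4 := h.card v hv hpq
          rw [Finset.card_powerset] at h1
          have h5 : 2 ^ (S (p v)).card ≤ 2 ^ k := Nat.pow_le_pow_right (by norm_num) h4
          omega
        · by_cases hxW : x ∈ W
          · rw [lab_in hxW]
            exact Finset.mem_union_right _ (mem_vertT ((keyW x hxW hx).2.1 hpq))
          · rw [lab_out hxW, ← keyP x hxW hx]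
            exact Finset.mem_union_left _ (mem_pieceT (Finset.mem_powerset.2
              (Finset.filter_subset _ _)))

/-- A piece `i` attached inside `B`, but not inside `A`, can be absorbed: shrinking its attachment
to `S i ∩ A` leaves at most `2 ^ (k - 1)` classes, which are then merged into the classes of the
accumulated piece `q`. -/
lemma Mid.absorb {D k q i : ℕ} {W A B : Finset V} {𝒵 : Finset (Finset V)}
    {S : ℕ → Finset V} {p : V → ℕ} (h : Mid G D k q W A B 𝒵 S p) (hk : 1 ≤ k) (hiq : i ≠ q)
    (hAB : A ⊆ B) (hBW : B ⊆ W) (hi : (S i).card ≤ k) (hiB : S i ⊆ B) (hiA : ¬ S i ⊆ A)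
    (hpat : ∀ v, v ∉ W → p v = i → A.filter (G.Adj v) ∈ 𝒵) (h𝒵 : 1 ≤ 𝒵.card)
    (N1 : 2 ^ k + k ≤ D + 1) (N2 : 𝒵.card + 2 ^ (k - 1) ≤ D)
    (N3 : 𝒵.card + (B \ A).card + 2 ^ (k - 1) ≤ D + 2)
    (N4 : 𝒵.card + (B \ A).card ≤ D + 1) :
    Mid G D k q W A B 𝒵 S (fun v => if p v = i then q else p v) := by
  have hshrink := absorb_shrink h hk hiq hi N1 N2 N4
  set S₁ := Function.update S i (S i ∩ A) with hS₁
  set p₁ : V → ℕ := fun v => if p v = i then q else p v with hp₁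
  have hSi : S₁ i = S i ∩ A := Function.update_self ..
  have hSne : ∀ j, j ≠ i → S₁ j = S j := fun j hj => Function.update_of_ne hj ..
  have hSq : S₁ q = A := by rw [hSne q hiq.symm, h.Sq]
  have hp₁q : ∀ v, p₁ v = q ↔ p v = q ∨ p v = i := by
    intro v
    simp only [hp₁]
    split_ifs with hv <;> simp [hv]
  have hp₁ne : ∀ v, p₁ v ≠ q → p₁ v = p v ∧ p v ≠ q ∧ p v ≠ i := by
    intro v hv
    have := mt (hp₁q v).2 hv
    push Not at this
    exact ⟨if_neg this.2, this⟩
  have hconn : ∀ v u, v ∉ W → u ∉ W → G.Adj v u → p₁ v = p₁ u := by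
    intro v u hv hu hvu
    simp only [hp₁, h.conn v u hv hu hvu]
  have hatt : ∀ v u, v ∉ W → u ∈ W → G.Adj v u → p₁ v ≠ q → u ∈ S (p₁ v) := by
    intro v u hv hu hvu hne
    obtain ⟨h1, h2, -⟩ := hp₁ne v hne
    rw [h1]
    exact h.att v u hv hu hvu h2
  have hattq : ∀ v u, v ∉ W → u ∈ W → G.Adj v u → p₁ v = q → u ∈ B := by
    intro v u hv hu hvu he
    rcases (hp₁q v).1 he with he | he
    · exact h.attq v u hv hu hvu he
    · have := h.att v u hv hu hvu (by rw [he]; exact hiq)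
      rw [he] at this
      exact hiB this
  have hpat' : ∀ v, v ∉ W → p₁ v = q → A.filter (G.Adj v) ∈ 𝒵 := fun v hv he =>
    ((hp₁q v).1 he).elim (h.pat v hv) (hpat v hv)
  have hcard : ∀ v, v ∉ W → p₁ v ≠ q → (S (p₁ v)).card ≤ k := by
    intro v hv hne
    obtain ⟨h1, h2, -⟩ := hp₁ne v hne
    rw [h1]
    exact h.card v hv h2
  refine ⟨?_, hconn, hatt, hattq, h.Sq, hpat', hcard⟩
  refine hshrink.coarsen ?_ ?_
  · intro x y hxy
    have hxy : lab G W p S₁ x = lab G W p S₁ y := hxy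
    change lab G W p₁ S x = lab G W p₁ S y
    by_cases hx : x ∈ W
    · rw [lab_eq_in hx hxy]
    · obtain ⟨hy, hp, hf⟩ := lab_eq_out hx hxy
      refine lab_eq_of hx hy (by simp only [hp₁, hp]) fun a ha => ?_
      by_cases hpi : p x = i
      · -- A piece has no edges to `W` outside its attachment.
        have ha : a ∈ A := by rwa [show p₁ x = q from if_pos hpi, h.Sq] at ha
        rw [hpi, hSi] at hf
        have aux : ∀ z, z ∉ W → p z = i → G.Adj z a → a ∈ S i ∩ A := by
          intro z hz hzi hza
          have := h.att z a hz (hBW (hAB ha)) hza (by rw [hzi]; exact hiq)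
          rw [hzi] at this
          exact Finset.mem_inter.2 ⟨this, ha⟩
        have := Finset.ext_iff.1 hf a
        rw [Finset.mem_filter, Finset.mem_filter] at this
        constructor
        · exact fun hxa => (this.1 ⟨aux x hx hpi hxa, hxa⟩).2
        · exact fun hya => (this.2 ⟨aux y hy (hp.symm.trans hpi) hya, hya⟩).2
      · rw [show p₁ x = p x from if_neg hpi] at ha
        rw [hSne _ hpi] at hf
        have := Finset.ext_iff.1 hf a
        simpa [ha] using this
  · intro r hr1 hr2 v
    have hℓ : ∀ x y, lab G W p S₁ x = lab G W p S₁ y → r x y := hr1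
    have hr2 : ∀ x y, r x y → lab G W p₁ S x = lab G W p₁ S y := hr2
    have hpow : 2 ^ (k - 1) * 2 = 2 ^ k := by rw [← pow_succ]; congr 1; omega
    have hkD : 2 ^ k ≤ D := by omega
    have hb : (pieceT i (S i ∩ A).powerset).card ≤ 2 ^ (k - 1) := by
      refine (card_pieceT _ _).trans ?_
      rw [Finset.card_powerset]
      refine Nat.pow_le_pow_right (by norm_num) ?_
      have : (S i ∩ A).card < (S i).card := Finset.card_lt_card
        ⟨Finset.inter_subset_left, fun hs => hiA fun x hx => (Finset.mem_inter.1 (hs hx)).2⟩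
      omega
    have ha := card_pieceT (V := V) q 𝒵
    have hm := card_vertT (B \ A)
    have hlabq : ∀ x, x ∉ W → p x = q → lab G W p S₁ x ∈ pieceT q 𝒵 := by
      intro x hx hpx
      rw [lab_out hx, hpx, hSq]
      exact mem_pieceT (h.pat x hx hpx)
    have hlabi : ∀ x, x ∉ W → p x = i →
        lab G W p S₁ x ∈ pieceT i (S i ∩ A).powerset := by
      intro x hx hpx
      rw [lab_out hx, hpx, hSi]
      exact mem_pieceT (Finset.mem_powerset.2 (Finset.filter_subset _ _))
    have hlab : ∀ x, x ∉ W → p₁ x = q →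
        lab G W p S₁ x ∈ pieceT q 𝒵 ∪ pieceT i (S i ∩ A).powerset := fun x hx he =>
      ((hp₁q x).1 he).elim (fun h => Finset.mem_union_left _ (hlabq x hx h))
        (fun h => Finset.mem_union_right _ (hlabi x hx h))
    have hc := Finset.card_union_le (pieceT q 𝒵) (pieceT i (S i ∩ A).powerset)
    by_cases hv : v ∈ W
    · refine (deg_le (lab G W p S₁) hℓ v (pieceT q 𝒵 ∪ pieceT i (S i ∩ A).powerset)
        fun x hx => ⟨x, r.refl x, ?_⟩).trans (by omega)
      obtain ⟨hxW, hvS, ⟨y, -, hyW, hpy, hadj⟩, -⟩ := red_single hr2 hv hx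
      refine hlab x hxW ?_
      by_contra hne
      refine hvS ?_
      rw [← hpy] at hne ⊢
      exact hatt y v hyW hv hadj hne
    · have keyW : ∀ x, x ∈ W → RedR G r v x → x ∉ S (p₁ v) ∧
          (p₁ v ≠ q → x ∈ S (p₁ v)) ∧ (p₁ v = q → x ∈ B) := by
        intro x hxW hx
        obtain ⟨-, hvS, ⟨y, -, hyW, hpy, hadj⟩, -⟩ := red_single hr2 hxW hx.symm
        refine ⟨hvS, fun hne => ?_, fun he => ?_⟩
        · rw [← hpy]
          exact hatt y x hyW hxW hadj (by rwa [hpy])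
        · exact hattq y x hyW hxW hadj (by rwa [hpy])
      have keyP : ∀ x, x ∉ W → RedR G r v x → p₁ v = p₁ x := fun x hxW hx =>
        red_piece hr2 hconn hv hxW hx
      by_cases hpq : p₁ v = q
      · have keyU : ∀ x, x ∈ W → RedR G r v x → lab G W p S₁ x ∈ vertT (B \ A) := by
          intro x hxW hx
          obtain ⟨h1, -, h2⟩ := keyW x hxW hx
          rw [hpq, h.Sq] at h1
          rw [lab_in hxW]
          exact mem_vertT (Finset.mem_sdiff.2 ⟨h2 hpq, h1⟩)
        by_cases hmerge : ∃ y z, y ∉ W ∧ z ∉ W ∧ p y = q ∧ p z = i ∧ r y z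
        · -- Once a class of `i` has been merged into `q`, one label is saved.
          obtain ⟨y, z, hyW, hzW, hy, hz, hyz⟩ := hmerge
          have hne : lab G W p S₁ y ≠ lab G W p S₁ z := fun he =>
            hiq (by rw [← hy, ← hz]; exact (lab_eq_out hyW he).2.1.symm)
          have := deg_lt_of_merged (G := G) (lab G W p S₁) hℓ v
            (pieceT q 𝒵 ∪ pieceT i (S i ∩ A).powerset ∪ vertT (B \ A))
            (fun x hx => ⟨x, r.refl x, ?_⟩) (Finset.mem_union_left _ (hlab v hv hpq))
            y z hyz hne
            (Finset.mem_union_left _ (Finset.mem_union_left _ (hlabq y hyW hy)))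
            (Finset.mem_union_left _ (Finset.mem_union_right _ (hlabi z hzW hz)))
          · have := Finset.card_union_le (pieceT q 𝒵 ∪ pieceT i (S i ∩ A).powerset)
              (vertT (B \ A))
            omega
          · by_cases hxW : x ∈ W
            · exact Finset.mem_union_right _ (keyU x hxW hx)
            · exact Finset.mem_union_left _ (hlab x hxW ((keyP x hxW hx).symm.trans hpq))
        · -- Before the first such merge there are no red edges between `i` and `q`.
          have key : ∀ x, x ∉ W → RedR G r v x → p v = p x := by
            intro x hxW hx
            obtain ⟨-, ⟨a, b, hva, hxb, hab⟩, -⟩ := id hx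
            have stay : ∀ s t, s ∉ W → p₁ s = q → r s t → t ∉ W ∧ p s = p t := by
              intro s t hs hsq hst
              obtain ⟨ht, hpt, -⟩ := lab_eq_out hs (hr2 _ _ hst)
              refine ⟨ht, ?_⟩
              rcases (hp₁q s).1 hsq with h1 | h1 <;>
                rcases (hp₁q t).1 (hpt.symm.trans hsq) with h2 | h2
              · rw [h1, h2]
              · exact (hmerge ⟨s, t, hs, ht, h1, h2, hst⟩).elim
              · exact (hmerge ⟨t, s, ht, hs, h2, h1, r.symm hst⟩).elim
              · rw [h1, h2]
            obtain ⟨haW, hpa⟩ := stay v a hv hpq hva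
            obtain ⟨hbW, hpb⟩ := stay x b hxW ((keyP x hxW hx).symm.trans hpq) hxb
            rw [hpa, hpb]
            exact h.conn a b haW hbW hab
          rcases (hp₁q v).1 hpq with hpv | hpv
          · have := deg_lt (G := G) (lab G W p S₁) hℓ v (pieceT q 𝒵 ∪ vertT (B \ A))
              (fun x hx => ⟨x, r.refl x, ?_⟩) (Finset.mem_union_left _ (hlabq v hv hpv))
            · have := Finset.card_union_le (pieceT q 𝒵) (vertT (B \ A))
              omega
            · by_cases hxW : x ∈ W
              · exact Finset.mem_union_right _ (keyU x hxW hx)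
              · exact Finset.mem_union_left _ (hlabq x hxW ((key x hxW hx).symm.trans hpv))
          · have := deg_lt (G := G) (lab G W p S₁) hℓ v
              (pieceT i (S i ∩ A).powerset ∪ vertT (B \ A))
              (fun x hx => ⟨x, r.refl x, ?_⟩) (Finset.mem_union_left _ (hlabi v hv hpv))
            · have := Finset.card_union_le (pieceT i (S i ∩ A).powerset) (vertT (B \ A))
              omega
            · by_cases hxW : x ∈ W
              · exact Finset.mem_union_right _ (keyU x hxW hx)
              · exact Finset.mem_union_left _ (hlabi x hxW ((key x hxW hx).symm.trans hpv))
      · -- A piece that is neither `i` nor `q` has red edges only to itself.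
        obtain ⟨h1, h2, h3⟩ := hp₁ne v hpq
        refine (deg_le (G := G) (lab G W p S₁) hℓ v (pieceT (p v) (S (p v)).powerset)
          (fun x hx => ⟨x, r.refl x, ?_⟩)).trans ?_
        · by_cases hxW : x ∈ W
          · obtain ⟨g1, g2, -⟩ := keyW x hxW hx
            exact absurd (g2 hpq) g1
          · have hpx := keyP x hxW hx
            have hpx' := (hp₁ne x (by rwa [← hpx])).1
            have : p x = p v := by rw [← h1, ← hpx', hpx]
            rw [lab_out hxW, this, hSne _ h3]
            exact mem_pieceT (Finset.mem_powerset.2 (Finset.filter_subset _ _))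
        · refine (card_pieceT _ _).trans ?_
          rw [Finset.card_powerset]
          exact (Nat.pow_le_pow_right (by norm_num) (h.card v hv h2)).trans hkD

/-- All pieces but those with a number in `K` can be absorbed one after the other. -/
lemma Mid.absorb_all {D k q : ℕ} {W A B : Finset V} {𝒵 : Finset (Finset V)}
    {S : ℕ → Finset V} (K : ℕ → Prop) (hk : 1 ≤ k) (hAB : A ⊆ B) (hBW : B ⊆ W)
    (h𝒵 : 1 ≤ 𝒵.card) (N1 : 2 ^ k + k ≤ D + 1) (N2 : 𝒵.card + 2 ^ (k - 1) ≤ D)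
    (N3 : 𝒵.card + (B \ A).card + 2 ^ (k - 1) ≤ D + 2)
    (N4 : 𝒵.card + (B \ A).card ≤ D + 1) {p : V → ℕ} (h : Mid G D k q W A B 𝒵 S p)
    (hK : ∀ v, v ∉ W → p v ≠ q → ¬ K (p v) →
      S (p v) ⊆ B ∧ ¬ S (p v) ⊆ A ∧ A.filter (G.Adj v) ∈ 𝒵) :
    ∃ p', Mid G D k q W A B 𝒵 S p' ∧ ∀ v, v ∉ W → p' v ≠ q → K (p' v) := by
  induction hn : (Finset.univ.filter fun v => v ∉ W ∧ p v ≠ q ∧ ¬ K (p v)).card using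
    Nat.strong_induction_on generalizing p with
  | _ n ih =>
    by_cases hall : ∀ v, v ∉ W → p v ≠ q → K (p v)
    · exact ⟨p, h, hall⟩
    push Not at hall
    obtain ⟨v, hvW, hvq, hvK⟩ := hall
    obtain ⟨h1, h2, -⟩ := hK v hvW hvq hvK
    have hne : ∀ u, (if p u = p v then q else p u) ≠ q →
        (if p u = p v then q else p u) = p u ∧ p u ≠ q := by
      intro u hu
      split_ifs at hu ⊢ with huv
      · exact absurd rfl hu
      · exact ⟨rfl, hu⟩
    refine ih _ ?_ (h.absorb hk hvq hAB hBW (h.card v hvW hvq) h1 h2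
      (fun u hu hup => (hK u hu (hup ▸ hvq) (hup ▸ hvK)).2.2) h𝒵 N1 N2 N3 N4) ?_ rfl
    · rw [← hn]
      refine Finset.card_lt_card (Finset.ssubset_iff_of_subset ?_ |>.2 ⟨v, ?_, ?_⟩)
      · intro u hu
        simp only [Finset.mem_filter, Finset.mem_univ, true_and] at hu ⊢
        obtain ⟨g1, g2, g3⟩ := hu
        obtain ⟨e1, e2⟩ := hne u g2
        rw [e1] at g3
        exact ⟨g1, e2, g3⟩
      · simp [hvW, hvq, hvK]
      · simp
    · intro u hu huq huK
      obtain ⟨e1, e2⟩ := hne u huq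
      rw [e1] at huK ⊢
      exact hK u hu e2 huK

/-- When no further piece is attached to `B \ A`, the vertices of `B \ A` can be contracted into
the accumulated piece, which is then attached to `A`. -/
lemma Mid.finish {D k q : ℕ} {W A B : Finset V} {𝒵 : Finset (Finset V)}
    {S : ℕ → Finset V} {p : V → ℕ} (h : Mid G D k q W A B 𝒵 S p) (hBW : B ⊆ W)
    (hk : 1 ≤ k) (N1 : 2 ^ k + k ≤ D + 1) (N4 : 𝒵.card + (B \ A).card ≤ D + 1)
    (hdisj : ∀ v, v ∉ W → p v ≠ q → Disjoint (S (p v)) (B \ A))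
    (hedge : ∀ u v, u ∈ B \ A → v ∈ W → G.Adj u v → v ∈ B) (p' : V → ℕ)
    (hp' : p' = fun v => if v ∈ W then q else p v) :
    Reach G D (Setoid.ker (lab G (W \ (B \ A)) p' S)) ∧
    (∀ v u, v ∉ W \ (B \ A) → u ∉ W \ (B \ A) → G.Adj v u → p' v = p' u) ∧
    (∀ v u, v ∉ W \ (B \ A) → u ∈ W \ (B \ A) → G.Adj v u → u ∈ S (p' v)) := by
  have hin : ∀ v, v ∈ W → p' v = q := fun v hv => by rw [hp']; exact if_pos hv
  have hout : ∀ v, v ∉ W → p' v = p v := fun v hv => by rw [hp']; exact if_neg hv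
  have hU : ∀ v, v ∈ W → v ∉ W \ (B \ A) → v ∈ B \ A := by
    intro v hv hv'
    by_contra hc
    exact hv' (Finset.mem_sdiff.2 ⟨hv, hc⟩)
  have hW' : ∀ v, v ∉ W → v ∉ W \ (B \ A) := fun v hv hv' => hv (Finset.mem_sdiff.1 hv').1
  have hUq : ∀ v u, v ∈ B \ A → u ∉ W → G.Adj u v → p u = q := by
    intro v u hv hu huv
    by_contra hne
    exact Finset.disjoint_left.1 (hdisj u hu hne)
      (h.att u v hu (hBW (Finset.mem_sdiff.1 hv).1) huv hne) hv
  have hconn : ∀ v u, v ∉ W \ (B \ A) → u ∉ W \ (B \ A) → G.Adj v u → p' v = p' u := by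
    intro v u hv hu hvu
    by_cases hvW : v ∈ W <;> by_cases huW : u ∈ W
    · rw [hin v hvW, hin u huW]
    · rw [hin v hvW, hout u huW, hUq v u (hU v hvW hv) huW hvu.symm]
    · rw [hin u huW, hout v hvW, hUq u v (hU u huW hu) hvW hvu]
    · rw [hout u huW, hout v hvW, h.conn v u hvW huW hvu]
  have hatt : ∀ v u, v ∉ W \ (B \ A) → u ∈ W \ (B \ A) → G.Adj v u → u ∈ S (p' v) := by
    intro v u hv hu hvu
    obtain ⟨huW, huU⟩ := Finset.mem_sdiff.1 hu
    have hBA : u ∈ B → u ∈ A := fun huB => by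
      by_contra huA
      exact huU (Finset.mem_sdiff.2 ⟨huB, huA⟩)
    by_cases hvW : v ∈ W
    · rw [hin v hvW, h.Sq]
      exact hBA (hedge v u (hU v hvW hv) huW hvu)
    · rw [hout v hvW]
      by_cases hq : p v = q
      · rw [hq, h.Sq]
        exact hBA (h.attq v u hvW huW hvu hq)
      · exact h.att v u hvW huW hvu hq
  refine ⟨?_, hconn, hatt⟩
  refine h.reach.coarsen ?_ ?_
  · intro x y hxy
    have hxy : lab G W p S x = lab G W p S y := hxy
    change lab G _ p' S x = lab G _ p' S y
    by_cases hx : x ∈ W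
    · rw [lab_eq_in hx hxy]
    · obtain ⟨hy, hp, hf⟩ := lab_eq_out hx hxy
      refine lab_eq_of (hW' x hx) (hW' y hy) (by rw [hout x hx, hout y hy, hp]) fun a ha => ?_
      rw [hout x hx] at ha
      have := Finset.ext_iff.1 hf a
      simpa [ha] using this
  · intro r hr1 hr2 v
    have hℓ : ∀ x y, lab G W p S x = lab G W p S y → r x y := hr1
    have hr2 : ∀ x y, r x y →
      lab G (W \ (B \ A)) p' S x = lab G (W \ (B \ A)) p' S y := hr2
    have single : ∀ v x, v ∈ W \ (B \ A) → ¬ RedR G r v x := by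
      intro v x hv hx
      obtain ⟨-, hvS, ⟨y, -, hyW, hpy, hadj⟩, -⟩ := red_single hr2 hv hx
      exact hvS (hpy ▸ hatt y v hyW hv hadj)
    by_cases hv : v ∈ W \ (B \ A)
    · exact (deg_le (G := G) (lab G W p S) hℓ v ∅ fun x hx => (single v x hv hx).elim).trans
        (Nat.zero_le D)
    have hpiece : ∀ x, RedR G r v x → x ∉ W \ (B \ A) ∧ p' v = p' x := by
      intro x hx
      have hxW : x ∉ W \ (B \ A) := fun hxW => single x v hxW hx.symm
      exact ⟨hxW, red_piece hr2 hconn hv hxW hx⟩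
    by_cases hq : p' v = q
    · have hlab : ∀ x, x ∉ W \ (B \ A) → p' x = q →
          lab G W p S x ∈ pieceT q 𝒵 ∪ vertT (B \ A) := by
        intro x hx hpx
        by_cases hxW : x ∈ W
        · rw [lab_in hxW]
          exact Finset.mem_union_right _ (mem_vertT (hU x hxW hx))
        · rw [hout x hxW] at hpx
          rw [lab_out hxW, hpx, h.Sq]
          exact Finset.mem_union_left _ (mem_pieceT (h.pat x hxW hpx))
      have := deg_lt (G := G) (lab G W p S) hℓ v (pieceT q 𝒵 ∪ vertT (B \ A))
        (fun x hx => ⟨x, r.refl x, hlab x (hpiece x hx).1 ((hpiece x hx).2.symm.trans hq)⟩)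
        (hlab v hv hq)
      have h1 := card_pieceT (V := V) q 𝒵
      have h2 := card_vertT (B \ A)
      have h3 := Finset.card_union_le (pieceT q 𝒵) (vertT (B \ A))
      omega
    · have hout' : ∀ x, p' x ≠ q → x ∉ W := fun x hx hxW => hx (hin x hxW)
      refine (deg_le (G := G) (lab G W p S) hℓ v (pieceT (p v) (S (p v)).powerset)
        (fun x hx => ⟨x, r.refl x, ?_⟩)).trans ?_
      · have hpx := (hpiece x hx).2
        have hxW := hout' x (hpx ▸ hq)
        rw [hout v (hout' v hq), hout x hxW] at hpx
        rw [lab_out hxW, ← hpx]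
        exact mem_pieceT (Finset.mem_powerset.2 (Finset.filter_subset _ _))
      · refine (card_pieceT _ _).trans ?_
        rw [Finset.card_powerset]
        have hvW := hout' v hq
        have := Nat.pow_le_pow_right (n := 2) (by norm_num)
          (h.card v hvW (by rwa [← hout v hvW]))
        omega

end Absorb

/-! ### Removing the bags one by one -/

/-- A list of bags, to be removed from the head. Each bag `B` meets the union of the later bags
only in a subset `A` of one of them, where either `A` has exactly `k` elements or `B` has at most
`k`. The empty bag at the end serves as a parent of the root. -/
inductive BagList (k w : ℕ) : List (Finset V) → Prop
  | base : BagList k w [∅]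
  | cons {L : List (Finset V)} (A B b : Finset V) : BagList k w L → b ∈ L → A ⊆ b → A ⊆ B →
      (∀ v ∈ B, ∀ c ∈ L, v ∈ c → v ∈ A) →
      (A.card = k ∧ B.card ≤ w + 1 ∨ B.card ≤ k) → BagList k w (B :: L)

section Stages

variable [Fintype V] {G : SimpleGraph V}

/-- The bags in `L`, with union `W`, remain; everything else has been contracted into pieces
attached to subsets of these bags of size at most `k`. -/
structure Stage (G : SimpleGraph V) (D k : ℕ) (L : List (Finset V)) (W : Finset V)
    (p : V → ℕ) (S : ℕ → Finset V) : Prop where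
  reach : Reach G D (Setoid.ker (lab G W p S))
  conn : ∀ v u, v ∉ W → u ∉ W → G.Adj v u → p v = p u
  att : ∀ v u, v ∉ W → u ∈ W → G.Adj v u → u ∈ S (p v)
  card : ∀ v, v ∉ W → (S (p v)).card ≤ k
  sub : ∀ v, v ∉ W → ∃ b ∈ L, S (p v) ⊆ b
  mem : ∀ v, v ∈ W ↔ ∃ b ∈ L, v ∈ b
  edge : ∀ u v, u ∈ W → v ∈ W → G.Adj u v → ∃ b ∈ L, u ∈ b ∧ v ∈ b

lemma two_pow_add_sub_le {j k : ℕ} (h : j ≤ k) : 2 ^ j + (k - j) ≤ 2 ^ k := by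
  induction k, h using Nat.le_induction with
  | base => simp
  | succ k hk ih =>
    have : 1 ≤ 2 ^ k := Nat.one_le_two_pow
    rw [pow_succ]
    omega

/-- Removal of the head bag `B`. The accumulated classes are numbered by subsets of `A`. If `A`
has `k` elements, then `A` itself does not occur among these subsets: a piece adjacent to
all of `A` would be attached exactly to `A` and hence need not be absorbed. -/
lemma Stage.remove {D k w : ℕ} {L : List (Finset V)} {W : Finset V} {p : V → ℕ}
    {S : ℕ → Finset V} (hk : 1 ≤ k) (hD : D = 3 * 2 ^ (k - 1) + (w - (k + 2)))
    {A B b : Finset V} (h : Stage G D k (B :: L) W p S) (hb : b ∈ L) (hAb : A ⊆ b)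
    (hAB : A ⊆ B) (hBL : ∀ v ∈ B, ∀ c ∈ L, v ∈ c → v ∈ A)
    (hc : A.card = k ∧ B.card ≤ w + 1 ∨ B.card ≤ k) :
    ∃ W' p' S', Stage G D k L W' p' S' := by
  have hpow : 2 ^ (k - 1) * 2 = 2 ^ k := by rw [← pow_succ]; congr 1; omega
  have hkp : k - 1 < 2 ^ (k - 1) := Nat.lt_two_pow_self
  have hAk : A.card ≤ k := hc.elim (fun h => h.1.le) (fun h => (Finset.card_le_card hAB).trans h)
  have hsd := Finset.card_sdiff_add_card_eq_card hAB
  have hBW : B ⊆ W := fun v hv => (h.mem v).2 ⟨B, List.mem_cons_self, hv⟩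
  have hcL : ∀ c ∈ L, ∀ v ∈ c, v ∉ B \ A := fun c hcL v hv hv' =>
    (Finset.mem_sdiff.1 hv').2 (hBL v (Finset.mem_sdiff.1 hv').1 c hcL hv)
  have N1 : 2 ^ k + k ≤ D + 1 := by omega
  -- `q` is a piece number not yet in use.
  obtain ⟨q, hq⟩ : ∃ q, ∀ v, p v ≠ q := by
    obtain ⟨q, hq⟩ := Infinite.exists_notMem_finset (Finset.univ.image p)
    exact ⟨q, fun v hv => hq (Finset.mem_image.2 ⟨v, Finset.mem_univ v, hv⟩)⟩
  set S₀ := Function.update S q A with hS₀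
  have hS₀q : S₀ q = A := Function.update_self ..
  have hS₀p : ∀ v, S₀ (p v) = S (p v) := fun v => Function.update_of_ne (hq v) ..
  -- The patterns occurring in the accumulated piece.
  obtain ⟨𝒵, h𝒵, N2, N3, N4, hpat⟩ : ∃ 𝒵 : Finset (Finset V), 1 ≤ 𝒵.card ∧
      𝒵.card + 2 ^ (k - 1) ≤ D ∧ 𝒵.card + (B \ A).card + 2 ^ (k - 1) ≤ D + 2 ∧
      𝒵.card + (B \ A).card ≤ D + 1 ∧
      ∀ v, v ∉ W → ¬ S (p v) ⊆ A → A.filter (G.Adj v) ∈ 𝒵 := by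
    rcases hc with ⟨hA, hB⟩ | hB
    · have hcard : A.ssubsets.card = 2 ^ k - 1 := by
        rw [Finset.ssubsets, Finset.card_erase_of_mem (Finset.mem_powerset_self A),
          Finset.card_powerset, hA]
      refine ⟨A.ssubsets, by omega, by omega, by omega, by omega, fun v hv hSA => ?_⟩
      refine Finset.mem_ssubsets.2 ⟨Finset.filter_subset _ _, fun hle => hSA ?_⟩
      have hAS : A ⊆ S (p v) := fun a ha =>
        h.att v a hv (hBW (hAB ha)) (Finset.mem_filter.1 (hle ha)).2
      rw [Finset.eq_of_subset_of_card_le hAS ((h.card v hv).trans hA.ge)]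
    · have hcard := Finset.card_powerset A
      have h1 := two_pow_add_sub_le hAk
      refine ⟨A.powerset, ?_, by omega, by omega, by omega, fun v hv _ =>
        Finset.mem_powerset.2 (Finset.filter_subset _ _)⟩
      rw [hcard]
      exact Nat.one_le_two_pow
  have hmid : Mid G D k q W A B 𝒵 S₀ p := by
    refine ⟨?_, h.conn, fun v u hv hu hvu _ => ?_, fun v _ _ _ _ he => (hq v he).elim, hS₀q,
      fun v _ he => (hq v he).elim, fun v hv _ => ?_⟩
    · have : lab G W p S₀ = lab G W p S := by
        funext v
        simp only [lab, hS₀p]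
      rw [this]
      exact h.reach
    · rw [hS₀p]
      exact h.att v u hv hu hvu
    · rw [hS₀p]
      exact h.card v hv
  obtain ⟨p₁, hmid₁, hK⟩ := hmid.absorb_all (fun j => ∃ c ∈ L, S₀ j ⊆ c) hk hAB hBW h𝒵 N1 N2 N3
    N4 (by
      intro v hv _ hnK
      rw [hS₀p] at hnK ⊢
      have hnA : ¬ S (p v) ⊆ A := fun hs => hnK ⟨b, hb, hs.trans hAb⟩
      refine ⟨?_, hnA, hpat v hv hnA⟩
      obtain ⟨c, hc, hs⟩ := h.sub v hv
      rcases List.mem_cons.1 hc with rfl | hc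
      · exact hs
      · exact (hnK ⟨c, hc, hs⟩).elim)
  obtain ⟨hreach, hconn, hatt⟩ := hmid₁.finish hBW hk N1 N4
    (fun v hv hvq => by
      obtain ⟨c, hc, hs⟩ := hK v hv hvq
      exact Finset.disjoint_left.2 fun u hu => hcL c hc u (hs hu))
    (fun u v hu hv huv => by
      obtain ⟨c, hc, huc, hvc⟩ := h.edge u v (hBW (Finset.mem_sdiff.1 hu).1) hv huv
      rcases List.mem_cons.1 hc with rfl | hc
      · exact hvc
      · exact (hcL c hc u huc hu).elim) _ rfl
  have hmem : ∀ v, v ∈ W \ (B \ A) ↔ ∃ c ∈ L, v ∈ c := by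
    intro v
    rw [Finset.mem_sdiff]
    constructor
    · rintro ⟨hvW, hvU⟩
      obtain ⟨c, hc, hvc⟩ := (h.mem v).1 hvW
      rcases List.mem_cons.1 hc with rfl | hc
      · refine ⟨b, hb, hAb ?_⟩
        by_contra hvA
        exact hvU (Finset.mem_sdiff.2 ⟨hvc, hvA⟩)
      · exact ⟨c, hc, hvc⟩
    · rintro ⟨c, hc, hvc⟩
      exact ⟨(h.mem v).2 ⟨c, List.mem_cons_of_mem _ hc, hvc⟩, hcL c hc v hvc⟩
  refine ⟨W \ (B \ A), _, S₀, hreach, hconn, hatt, ?_, ?_, hmem, ?_⟩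
  · intro v hv
    split_ifs with hvW
    · rwa [hS₀q]
    · by_cases hvq : p₁ v = q
      · rwa [hvq, hS₀q]
      · exact hmid₁.card v hvW hvq
  · intro v hv
    split_ifs with hvW
    · exact ⟨b, hb, by rwa [hS₀q]⟩
    · by_cases hvq : p₁ v = q
      · exact ⟨b, hb, by rwa [hvq, hS₀q]⟩
      · exact hK v hvW hvq
  · intro u v hu hv huv
    obtain ⟨huW, huU⟩ := Finset.mem_sdiff.1 hu
    obtain ⟨hvW, hvU⟩ := Finset.mem_sdiff.1 hv
    obtain ⟨c, hc, huc, hvc⟩ := h.edge u v huW hvW huv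
    rcases List.mem_cons.1 hc with rfl | hc
    · refine ⟨b, hb, hAb ?_, hAb ?_⟩
      · by_contra hA
        exact huU (Finset.mem_sdiff.2 ⟨huc, hA⟩)
      · by_contra hA
        exact hvU (Finset.mem_sdiff.2 ⟨hvc, hA⟩)
    · exact ⟨c, hc, huc, hvc⟩

/-- When only the empty bag is left, there are no red edges and the rest is contracted
arbitrarily. -/
lemma Stage.reach_top {D k w : ℕ} (hk : 1 ≤ k) (hD : D = 3 * 2 ^ (k - 1) + (w - (k + 2)))
    {L : List (Finset V)} (hL : BagList k w L) {W : Finset V} {p : V → ℕ} {S : ℕ → Finset V}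
    (h : Stage G D k L W p S) : Reach G D ⊤ := by
  induction hL generalizing W p S with
  | cons A B b _ hb hAb hAB hBL hc ih =>
    obtain ⟨W', p', S', h'⟩ := h.remove hk hD hb hAb hAB hBL hc
    exact ih h'
  | base =>
    have hW : ∀ v, v ∉ W := fun v hv => by simpa using (h.mem v).1 hv
    refine h.reach.coarsen (fun _ _ _ => trivial) fun r hr _ v => ?_
    refine (deg_le (G := G) (lab G W p S) hr v ∅ ?_).trans (Nat.zero_le D)
    rintro x ⟨hvx, ⟨a, c, hva, hxc, hac⟩, -⟩
    refine (hvx (r.trans hva (r.trans (hr _ _ ?_) (r.symm hxc)))).elim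
    refine lab_eq_of (hW a) (hW c) (h.conn a c (hW a) (hW c) hac) fun u hu => ?_
    obtain ⟨b, hb, hs⟩ := h.sub a (hW a)
    obtain rfl : b = ∅ := by simpa using hb
    exact absurd (hs hu) (Finset.notMem_empty u)

end Stages

/-! ### Listing the bags of a tree decomposition -/

section Listing

variable {ι : Type*} {G : SimpleGraph V}

/-- A list of nodes containing the root, in which every other node stands before its parent. -/
inductive NodeList (D : RootedTreeDecomp G ι) : List ι → Prop
  | root : NodeList D [D.root]
  | cons {l : List ι} (t : ι) : NodeList D l → t ∉ l → D.par t ∈ l → NodeList D (t :: l)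

variable {D : RootedTreeDecomp G ι}

lemma NodeList.par_mem {l : List ι} (h : NodeList D l) : ∀ s ∈ l, D.par s ∈ l := by
  induction h with
  | root => simp [D.par_root]
  | cons t _ _ hp ih =>
    intro s hs
    rcases List.mem_cons.1 hs with rfl | hs
    · exact List.mem_cons_of_mem _ hp
    · exact List.mem_cons_of_mem _ (ih s hs)

lemma NodeList.iterate_mem {l : List ι} (h : NodeList D l) {s : ι} (hs : s ∈ l) (n : ℕ) :
    D.par^[n] s ∈ l := by
  induction n generalizing s with
  | zero => exact hs
  | succ n ih => exact ih (h.par_mem s hs)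

lemma NodeList.root_mem {l : List ι} (h : NodeList D l) : D.root ∈ l := by
  induction h with
  | root => simp
  | cons t _ _ _ ih => exact List.mem_cons_of_mem _ ih

lemma NodeList.extend {l : List ι} (h : NodeList D l) (t : ι) :
    ∃ l', NodeList D l' ∧ (∀ s ∈ l, s ∈ l') ∧ t ∈ l' := by
  obtain ⟨n, hn⟩ := D.reaches t
  induction n generalizing t with
  | zero => exact ⟨l, h, fun _ h => h, by rw [show t = D.root from hn]; exact h.root_mem⟩
  | succ n ih =>
    obtain ⟨l', h', hl, ht⟩ := ih (D.par t) hn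
    by_cases htl : t ∈ l'
    · exact ⟨l', h', hl, htl⟩
    · exact ⟨t :: l', .cons t h' htl ht, fun s hs => List.mem_cons_of_mem _ (hl s hs),
        List.mem_cons_self⟩

lemma exists_nodeList (D : RootedTreeDecomp G ι) (F : Finset ι) :
    ∃ l, NodeList D l ∧ ∀ t ∈ F, t ∈ l := by
  induction F using Finset.induction_on with
  | empty => exact ⟨_, .root, by simp⟩
  | insert t F _ ih =>
    obtain ⟨l, hl, hF⟩ := ih
    obtain ⟨l', hl', hs, ht⟩ := hl.extend t
    refine ⟨l', hl', fun s hs' => ?_⟩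
    rcases Finset.mem_insert.1 hs' with rfl | h
    · exact ht
    · exact hs s (hF s h)

/-- A bag `B` with more than `k` elements, meeting the rest in `A` with `|A| ≤ k`, is listed
together with an auxiliary bag `A'` of size `k` between `A` and `B`. -/
lemma BagList.add {k w : ℕ} {L : List (Finset V)} (hL : BagList k w L) {A B b : Finset V}
    (hb : b ∈ L) (hAb : A ⊆ b) (hAB : A ⊆ B) (hBL : ∀ v ∈ B, ∀ c ∈ L, v ∈ c → v ∈ A)
    (hA : A.card ≤ k) (hB : B.card ≤ w + 1) :
    ∃ L', BagList k w L' ∧ (∀ c ∈ L, c ∈ L') ∧ B ∈ L' ∧ ∀ c ∈ L', c ∈ L ∨ c ⊆ B := by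
  by_cases hBk : B.card ≤ k
  · refine ⟨B :: L, .cons A B b hL hb hAb hAB hBL (Or.inr hBk),
      fun c hc => List.mem_cons_of_mem _ hc, List.mem_cons_self, fun c hc => ?_⟩
    rcases List.mem_cons.1 hc with rfl | hc
    · exact Or.inr subset_rfl
    · exact Or.inl hc
  · obtain ⟨A', hAA', hA'B, hA'⟩ := Finset.exists_subsuperset_card_eq hAB hA (not_le.1 hBk).le
    have h1 : BagList k w (A' :: L) := .cons A A' b hL hb hAb hAA'
      (fun v hv => hBL v (hA'B hv)) (Or.inr hA'.le)
    refine ⟨B :: A' :: L, .cons A' B A' h1 List.mem_cons_self subset_rfl hA'B ?_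
      (Or.inl ⟨hA', hB⟩), fun c hc => List.mem_cons_of_mem _ (List.mem_cons_of_mem _ hc),
      List.mem_cons_self, fun c hc => ?_⟩
    · intro v hv c hc hvc
      rcases List.mem_cons.1 hc with rfl | hc
      · exact hvc
      · exact hAA' (hBL v hv c hc hvc)
    · rcases List.mem_cons.1 hc with rfl | hc
      · exact Or.inr subset_rfl
      rcases List.mem_cons.1 hc with rfl | hc
      · exact Or.inr hA'B
      · exact Or.inl hc

lemma NodeList.exists_bagList {k w : ℕ} (hwidth : ∀ t, (D.B t).card ≤ w + 1)
    (hadh : ∀ t, t ≠ D.root → (D.B t ∩ D.B (D.par t)).card ≤ k) {l : List ι}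
    (h : NodeList D l) :
    ∃ L, BagList k w L ∧ (∀ t ∈ l, D.B t ∈ L) ∧ ∀ c ∈ L, c = ∅ ∨ ∃ t ∈ l, c ⊆ D.B t := by
  induction h with
  | root =>
    obtain ⟨L, hL, -, hB, hc⟩ := (BagList.base (V := V) (k := k) (w := w)).add (A := ∅)
      (B := D.B D.root) (b := ∅) (by simp) subset_rfl (by simp) (by simp) (by simp)
      (hwidth _)
    refine ⟨L, hL, by simpa using hB, fun c hcL => ?_⟩
    rcases hc c hcL with h | h
    · exact Or.inl (by simpa using h)
    · exact Or.inr ⟨_, List.mem_cons_self, h⟩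
  | @cons l t hl ht hp ih =>
    obtain ⟨L, hL, hB, hc⟩ := ih
    have hroot : t ≠ D.root := fun e => ht (e ▸ hl.root_mem)
    obtain ⟨L', hL', hLL', hB', hc'⟩ := hL.add (A := D.B t ∩ D.B (D.par t)) (B := D.B t)
      (hB _ hp) Finset.inter_subset_right Finset.inter_subset_left (by
        intro v hv c hcL hvc
        refine Finset.mem_inter.2 ⟨hv, ?_⟩
        rcases hc c hcL with rfl | ⟨s, hs, hcs⟩
        · simp at hvc
        · -- Otherwise `t` would be an ancestor of `s`, but the list contains all of those.
          refine (D.subtree v t hv).resolve_right fun hall => ht ?_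
          obtain ⟨n, hn⟩ := hall s (hcs hvc)
          exact hn ▸ hl.iterate_mem hs n) (hadh t hroot) (hwidth t)
    refine ⟨L', hL', fun s hs => ?_, fun c hcL => ?_⟩
    · rcases List.mem_cons.1 hs with rfl | hs
      · exact hB'
      · exact hLL' _ (hB s hs)
    · rcases hc' c hcL with h | h
      · rcases hc c h with rfl | ⟨s, hs, hcs⟩
        · exact Or.inl rfl
        · exact Or.inr ⟨s, List.mem_cons_of_mem _ hs, hcs⟩
      · exact Or.inr ⟨t, List.mem_cons_self, h⟩

/-- Finitely many bags suffice to cover all vertices and edges. -/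
lemma exists_bagList [Fintype V] (D : RootedTreeDecomp G ι) {k w : ℕ}
    (hwidth : ∀ t, (D.B t).card ≤ w + 1)
    (hadh : ∀ t, t ≠ D.root → (D.B t ∩ D.B (D.par t)).card ≤ k) :
    ∃ L, BagList k w L ∧ (∀ v, ∃ b ∈ L, v ∈ b) ∧
      ∀ u v, G.Adj u v → ∃ b ∈ L, u ∈ b ∧ v ∈ b := by
  choose f hf using D.cover
  have : ∀ q : V × V, ∃ t, G.Adj q.1 q.2 → q.1 ∈ D.B t ∧ q.2 ∈ D.B t := by
    intro q
    by_cases h : G.Adj q.1 q.2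
    · obtain ⟨t, ht⟩ := D.edge _ _ h
      exact ⟨t, fun _ => ht⟩
    · exact ⟨D.root, fun h' => (h h').elim⟩
  choose g hg using this
  obtain ⟨l, hl, hF⟩ := exists_nodeList D (Finset.univ.image f ∪ Finset.univ.image g)
  obtain ⟨L, hL, hB, -⟩ := hl.exists_bagList hwidth hadh
  refine ⟨L, hL, fun v => ⟨_, hB (f v) (hF _ ?_), hf v⟩, fun u v huv =>
    ⟨_, hB (g (u, v)) (hF _ ?_), hg (u, v) huv⟩⟩
  · exact Finset.mem_union_left _ (Finset.mem_image_of_mem _ (Finset.mem_univ v))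
  · exact Finset.mem_union_right _ (Finset.mem_image_of_mem _ (Finset.mem_univ _))

end Listing

end TwwAdhesion

/-- if `G` has a tree decomposition of width `w` and adhesion `k ≥ 1`,
then `tww(G) ≤ 3·2^{k−1} + max(w−k−2, 0)`. -/
theorem tww_le_of_width_adhesion {V ι : Type*} [Fintype V] (G : SimpleGraph V)
    (D : RootedTreeDecomp G ι) (w k : ℕ) (hk : 1 ≤ k)
    (hwidth : ∀ t, (D.B t).card ≤ w + 1)
    (hadh : ∀ t, t ≠ D.root → (D.B t ∩ D.B (D.par t)).card ≤ k) :
    (G.toTrigraph).tww ≤ 3 * 2 ^ (k - 1) + max (w - (k + 2)) 0 := by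
  obtain ⟨L, hL, hcov, hedge⟩ := TwwAdhesion.exists_bagList D hwidth hadh
  rw [Nat.max_zero]
  refine TwwAdhesion.tww_le_of_reach ?_
  -- At the start every vertex is a singleton, and there are no pieces.
  refine TwwAdhesion.Stage.reach_top (W := Finset.univ) (p := fun _ => 0) (S := fun _ => ∅)
    hk rfl hL ⟨?_, by simp, by simp, by simp, by simp, by simpa using hcov,
      fun u v _ _ huv => hedge u v huv⟩
  convert TwwAdhesion.Reach.base (G := G)
  ext x y
  change TwwAdhesion.lab G Finset.univ _ _ x = TwwAdhesion.lab G Finset.univ _ _ y ↔ x = y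
  rw [TwwAdhesion.lab_in (Finset.mem_univ x), TwwAdhesion.lab_in (Finset.mem_univ y)]
  exact Sum.inl_injective.eq_iff

end
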